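/- Let n be a positive integer and let λ = (λ_1,…,λ_r) and μ = (μ_1,…,μ_s) be compositions of n, with associated blocks Y_i(λ), Y_j(μ) and Young subgroups S_λ, S_μ ≤ S_n. Then the map sending a permutation σ ∈ S_n to the r×s matrix (card(σ(Y_i(λ)) ∩ Y_j(μ)))_{i,j} induces a bijection between the set of double cosets S_μ\S_n/S_λ and the set of r×s matrices γ = (γ_{ij}) of nonnegative integers satisfying ∑_{j=1}^{s} γ_{ij} = λ_i for all i and ∑_{i=1}^{r} γ_{ij} = μ_j for all j. -/

import Mathlib

/-- The `i`-th consecutive block of `{0, …, n-1}` (0-indexed version of `{1, …, n}`)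
associated to a composition `lam = (lam 0, …, lam (r-1))` of `n`. -/
def blockSet (n : ℕ) {r : ℕ} (lam : Fin r → ℕ) (i : Fin r) : Finset (Fin n) :=
  Finset.univ.filter fun x : Fin n =>
    (∑ i' ∈ Finset.Iio i, lam i') ≤ (x : ℕ) ∧ (x : ℕ) < ∑ i' ∈ Finset.Iic i, lam i'

lemma exists_equiv_fib {α β ι : Type} [Fintype α] [Fintype β] [DecidableEq ι]
    (f : α → ι) (g : β → ι)
    (h : ∀ i, (Finset.univ.filter fun a => f a = i).card = (Finset.univ.filter fun b => g b = i).card) :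
    ∃ e : α ≃ β, ∀ a, g (e a) = f a := by
  have h' : ∀ i, Nonempty ({a // f a = i} ≃ {b // g b = i}) := by
    intro i
    rw [← Fintype.card_eq, Fintype.card_subtype, Fintype.card_subtype]
    exact h i
  exact ⟨Equiv.ofFiberEquiv (fun i => (h' i).some), fun a => Equiv.ofFiberEquiv_map _ a⟩

lemma blockSet_card (n r : ℕ) (lam : Fin r → ℕ) (hs : ∑ i, lam i = n) (i : Fin r) :
    (blockSet n lam i).card = lam i := by
  have h1 : ∑ i' ∈ Finset.Iic i, lam i' = ∑ i' ∈ Finset.Iio i, lam i' + lam i := by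
    rw [← Finset.Iio_insert, Finset.sum_insert (by simp), add_comm]
  have h2 : ∑ i' ∈ Finset.Iic i, lam i' ≤ n := by
    rw [← hs]
    exact Finset.sum_le_sum_of_subset (Finset.subset_univ _)
  have h3 : (blockSet n lam i).map Fin.valEmbedding =
      Finset.Ico (∑ i' ∈ Finset.Iio i, lam i') (∑ i' ∈ Finset.Iic i, lam i') := by
    ext x
    simp only [blockSet, Finset.mem_map, Finset.mem_filter, Finset.mem_univ, true_and,
      Fin.valEmbedding_apply, Finset.mem_Ico]
    constructor
    · rintro ⟨y, hy, rfl⟩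
      exact hy
    · intro hx
      exact ⟨⟨x, by omega⟩, hx, rfl⟩
  rw [← Finset.card_map Fin.valEmbedding, h3, Nat.card_Ico]
  omega

lemma blockSet_disj (n r : ℕ) (lam : Fin r → ℕ) {i j : Fin r} (hij : i < j) (x : Fin n)
    (hi : x ∈ blockSet n lam i) (hj : x ∈ blockSet n lam j) : False := by
  simp only [blockSet, Finset.mem_filter, Finset.mem_univ, true_and] at hi hj
  have : ∑ i' ∈ Finset.Iic i, lam i' ≤ ∑ i' ∈ Finset.Iio j, lam i' := by
    apply Finset.sum_le_sum_of_subset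
    intro k hk
    simp only [Finset.mem_Iic, Finset.mem_Iio] at *
    exact lt_of_le_of_lt hk hij
  omega

lemma blockSet_index (n r : ℕ) (lam : Fin r → ℕ) (hs : ∑ i, lam i = n) :
    ∃ f : Fin n → Fin r, (∀ i, blockSet n lam i = Finset.univ.filter fun x => f x = i) ∧
      ∀ i, (Finset.univ.filter fun x => f x = i).card = lam i := by
  have hd : ∀ x i j, x ∈ blockSet n lam i → x ∈ blockSet n lam j → i = j := by
    intro x i j hi hj
    rcases lt_trichotomy i j with h | h | h
    · exact (blockSet_disj n r lam h x hi hj).elim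
    · exact h
    · exact (blockSet_disj n r lam h x hj hi).elim
  have hu : Finset.univ.biUnion (blockSet n lam) = Finset.univ := by
    rw [← Finset.card_eq_iff_eq_univ, Finset.card_biUnion]
    · simp [blockSet_card n r lam hs, hs]
    · intro i _ j _ hij
      rw [Function.onFun, Finset.disjoint_left]
      intro x hi hj
      exact hij (hd x i j hi hj)
  have hex : ∀ x, ∃ i, x ∈ blockSet n lam i := by
    intro x
    have := Finset.mem_univ x
    rw [← hu] at this
    simpa using this
  choose f hf using hex
  have key : ∀ i, blockSet n lam i = Finset.univ.filter fun x => f x = i := by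
    intro i
    ext x
    simp only [Finset.mem_filter, Finset.mem_univ, true_and]
    constructor
    · intro h
      exact hd x _ _ (hf x) h
    · rintro rfl
      exact hf x
  refine ⟨f, key, fun i => ?_⟩
  rw [← key, blockSet_card n r lam hs]

lemma image_inter_fib {n r s : ℕ} (f : Fin n → Fin r) (g : Fin n → Fin s)
    (σ : Equiv.Perm (Fin n)) (i : Fin r) (j : Fin s) :
    (((Finset.univ.filter fun x => f x = i).image ⇑σ) ∩
      (Finset.univ.filter fun x => g x = j)).card =
    (Finset.univ.filter fun x => (f x, g (σ x)) = (i, j)).card := by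
  rw [← Finset.card_image_of_injective (Finset.univ.filter fun x => (f x, g (σ x)) = (i, j)) σ.injective]
  congr 1
  ext y
  simp only [Finset.mem_inter, Finset.mem_image, Finset.mem_filter, Finset.mem_univ, true_and,
    Prod.mk.injEq]
  constructor
  · rintro ⟨⟨x, hx, rfl⟩, hy⟩
    exact ⟨x, ⟨hx, hy⟩, rfl⟩
  · rintro ⟨x, ⟨hx, hy⟩, rfl⟩
    exact ⟨⟨x, hx, rfl⟩, hy⟩

lemma image_fib_iff {n r : ℕ} (f : Fin n → Fin r) (τ : Equiv.Perm (Fin n)) :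
    (∀ i, (Finset.univ.filter fun x => f x = i).image ⇑τ = Finset.univ.filter fun x => f x = i) ↔
      ∀ x, f (τ x) = f x := by
  constructor
  · intro h x
    have : τ x ∈ (Finset.univ.filter fun y => f y = f x).image ⇑τ :=
      Finset.mem_image_of_mem _ (by simp)
    rw [h] at this
    simpa using this
  · intro h i
    ext y
    simp only [Finset.mem_image, Finset.mem_filter, Finset.mem_univ, true_and]
    constructor
    · rintro ⟨x, hx, rfl⟩
      rw [h, hx]
    · intro hy
      refine ⟨τ.symm y, ?_, by simp⟩
      rw [← h, Equiv.apply_symm_apply, hy]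

/-- The map sending `σ ∈ S_n` to the matrix `(card (σ(Y_i(λ)) ∩ Y_j(μ)))_{i,j}` induces a
bijection between the double cosets `S_μ\S_n/S_λ` and the `r × s` matrices of nonnegative
integers with row sums `λ_i` and column sums `μ_j`: the matrix of any `σ` satisfies the
constraints, two permutations have the same matrix iff they lie in the same double coset,
and every constrained matrix arises from some permutation. -/
theorem double_cosets_biject_with_matrices (n r s : ℕ) (hn : 0 < n)
    (lam : Fin r → ℕ) (mu : Fin s → ℕ)
    (hlampos : ∀ i, 0 < lam i) (hmupos : ∀ j, 0 < mu j)
    (hlamsum : ∑ i, lam i = n) (hmusum : ∑ j, mu j = n) :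
    (∀ σ : Equiv.Perm (Fin n),
      (∀ i, ∑ j, (((blockSet n lam i).image ⇑σ) ∩ blockSet n mu j).card = lam i) ∧
      (∀ j, ∑ i, (((blockSet n lam i).image ⇑σ) ∩ blockSet n mu j).card = mu j)) ∧
    (∀ σ σ' : Equiv.Perm (Fin n),
      (∀ (i : Fin r) (j : Fin s),
        (((blockSet n lam i).image ⇑σ) ∩ blockSet n mu j).card =
        (((blockSet n lam i).image ⇑σ') ∩ blockSet n mu j).card) ↔
      (∃ τ₁ τ₂ : Equiv.Perm (Fin n),
        (∀ j, (blockSet n mu j).image ⇑τ₁ = blockSet n mu j) ∧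
        (∀ i, (blockSet n lam i).image ⇑τ₂ = blockSet n lam i) ∧
        σ' = τ₁ * σ * τ₂)) ∧
    (∀ γ : Fin r → Fin s → ℕ,
      (∀ i, ∑ j, γ i j = lam i) → (∀ j, ∑ i, γ i j = mu j) →
      ∃ σ : Equiv.Perm (Fin n), ∀ (i : Fin r) (j : Fin s),
        (((blockSet n lam i).image ⇑σ) ∩ blockSet n mu j).card = γ i j) := by
  obtain ⟨f, hf, hfc⟩ := blockSet_index n r lam hlamsum
  obtain ⟨g, hg, hgc⟩ := blockSet_index n s mu hmusum
  simp only [hf, hg, image_inter_fib, image_fib_iff]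
  refine ⟨fun σ => ⟨fun i => ?_, fun j => ?_⟩, fun σ σ' => ⟨fun h => ?_, ?_⟩, fun γ hr hc => ?_⟩
  · rw [← hfc i, Finset.card_eq_sum_card_fiberwise (f := fun x => g (σ x)) (t := Finset.univ)
      (by intro x _; simp)]
    simp only [Finset.filter_filter, Prod.mk.injEq]
  · have h1 : (Finset.univ.filter fun x => g (σ x) = j).card = mu j := by
      rw [← hgc j]
      exact Finset.card_bijective σ σ.bijective (by simp)
    rw [← h1, Finset.card_eq_sum_card_fiberwise (f := f) (t := Finset.univ)
      (by intro x _; simp)]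
    simp only [Finset.filter_filter, Prod.mk.injEq, and_comm]
  · obtain ⟨e, he⟩ := exists_equiv_fib (fun x => (f x, g (σ' x))) (fun x => (f x, g (σ x)))
      (fun p => (h p.1 p.2).symm)
    simp only [Prod.mk.injEq] at he
    refine ⟨σ' * e⁻¹ * σ⁻¹, e, fun y => ?_, fun x => (he x).1, by group⟩
    have := (he (e⁻¹ (σ⁻¹ y))).2
    rw [← Equiv.Perm.mul_apply e, mul_inv_cancel, Equiv.Perm.one_apply, ← Equiv.Perm.mul_apply σ, mul_inv_cancel, Equiv.Perm.one_apply] at this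
    simp only [Equiv.Perm.mul_apply]
    exact this.symm
  · rintro ⟨τ₁, τ₂, h1, h2, rfl⟩ i j
    symm
    refine Finset.card_bijective τ₂ τ₂.bijective ?_
    intro x
    simp [h1, h2]
  · have hA : ∀ p : Fin r × Fin s, (Finset.univ.filter
        fun a : (Σ p : Fin r × Fin s, Fin (γ p.1 p.2)) => a.1 = p).card = γ p.1 p.2 := by
      intro p
      rw [← Fintype.card_subtype, Fintype.card_congr (Equiv.sigmaSubtype p), Fintype.card_fin]
    obtain ⟨e, he⟩ := exists_equiv_fib
      (fun a : (Σ p : Fin r × Fin s, Fin (γ p.1 p.2)) => a.1.1) f (by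
        intro i
        rw [hfc, ← hr, Finset.card_eq_sum_card_fiberwise (f := fun a => a.1.2) (t := Finset.univ)
          (by intro x _; simp)]
        refine Finset.sum_congr rfl fun j _ => ?_
        rw [← hA (i, j), Finset.filter_filter]
        simp only [Prod.ext_iff])
    obtain ⟨e', he'⟩ := exists_equiv_fib
      (fun a : (Σ p : Fin r × Fin s, Fin (γ p.1 p.2)) => a.1.2) g (by
        intro j
        rw [hgc, ← hc, Finset.card_eq_sum_card_fiberwise (f := fun a => a.1.1) (t := Finset.univ)
          (by intro x _; simp)]
        refine Finset.sum_congr rfl fun i _ => ?_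
        rw [← hA (i, j), Finset.filter_filter]
        simp only [Prod.ext_iff, and_comm])
    refine ⟨e.symm.trans e', fun i j => ?_⟩
    rw [← hA (i, j)]
    symm
    refine Finset.card_bijective e e.bijective ?_
    intro a
    simp [he, he', Prod.ext_iff]
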